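/- arXiv:quant-ph/0510020 — 2 statements merged into one kernel-verified Lean document; each statement's English description precedes it below -/
import Mathlib

section
/- If c_x ≠ 0, c_y ≠ 0, c_z ≠ 0 and s₀ ∈ ℝ³ satisfies ‖s₀‖ ≤ 1, then for every T > 0 the set {t ∈ [0,T] : det A(t,s₀) = 0} is finite; in particular, det A(t,s₀) ≠ 0 for almost every t ≥ 0. -/
open Matrix Real

noncomputable section

/-- The matrix `A(t, s₀)` of the affine Bloch-vector dynamics. -/
def Amat (cx cy cz t : ℝ) (s : Fin 3 → ℝ) : Matrix (Fin 3) (Fin 3) ℝ :=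
  !![Real.sin (2*cy*t) * Real.sin (2*cz*t), -(s 2) * Real.sin (2*cy*t) * Real.cos (2*cz*t),
       s 1 * Real.cos (2*cy*t) * Real.sin (2*cz*t);
     s 2 * Real.sin (2*cx*t) * Real.cos (2*cz*t), Real.sin (2*cx*t) * Real.sin (2*cz*t),
       -(s 0) * Real.cos (2*cx*t) * Real.sin (2*cz*t);
     -(s 1) * Real.cos (2*cy*t) * Real.sin (2*cx*t), s 0 * Real.cos (2*cx*t) * Real.sin (2*cy*t),
       Real.sin (2*cx*t) * Real.sin (2*cy*t)]

/-- The inhomogeneous part `a(t, s₀)` of the affine Bloch-vector dynamics. -/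
def avec (cx cy cz t : ℝ) (s : Fin 3 → ℝ) : Fin 3 → ℝ :=
  ![s 0 * Real.cos (2*cy*t) * Real.cos (2*cz*t),
    s 1 * Real.cos (2*cx*t) * Real.cos (2*cz*t),
    s 2 * Real.cos (2*cx*t) * Real.cos (2*cy*t)]

open MeasureTheory

/-!
Expanding, `det A(t, s₀)` is a sum of four squares, one of which is the square of
`sin (2 cₓ t) sin (2 c_y t) sin (2 c_z t)`. It can therefore vanish only where one of the three
sines does, and the zeros of a nonzero analytic function are isolated.
-/

open Filter

lemma det_Amat (cx cy cz t : ℝ) (s : Fin 3 → ℝ) :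
    (Amat cx cy cz t s).det =
      (sin (2 * cx * t) * sin (2 * cy * t) * sin (2 * cz * t)) ^ 2 +
      (s 0 * cos (2 * cx * t) * sin (2 * cy * t) * sin (2 * cz * t)) ^ 2 +
      (s 1 * sin (2 * cx * t) * cos (2 * cy * t) * sin (2 * cz * t)) ^ 2 +
      (s 2 * sin (2 * cx * t) * sin (2 * cy * t) * cos (2 * cz * t)) ^ 2 := by
  simp only [Amat, det_fin_three, of_apply, cons_val]
  ring

lemma det_Amat_pos {cx cy cz t : ℝ} (hx : sin (2 * cx * t) ≠ 0) (hy : sin (2 * cy * t) ≠ 0)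
    (hz : sin (2 * cz * t) ≠ 0) (s : Fin 3 → ℝ) : 0 < (Amat cx cy cz t s).det := by
  rw [det_Amat]
  positivity

lemma eventually_codiscrete_sin_const_mul_ne_zero {a : ℝ} (ha : a ≠ 0) :
    ∀ᶠ t in codiscrete ℝ, sin (a * t) ≠ 0 := by
  have hanalytic : AnalyticOnNhd ℝ (fun t ↦ sin (a * t)) Set.univ := fun t _ ↦ by fun_prop
  have hne : sin (a * (π / 2 / a)) ≠ 0 := by
    rw [mul_div_cancel₀ _ ha, sin_pi_div_two]
    exact one_ne_zero
  exact hanalytic.preimage_zero_mem_codiscrete hne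

lemma eventually_codiscrete_det_Amat_ne_zero {cx cy cz : ℝ} (hx : cx ≠ 0) (hy : cy ≠ 0)
    (hz : cz ≠ 0) (s : Fin 3 → ℝ) :
    ∀ᶠ t in codiscrete ℝ, (Amat cx cy cz t s).det ≠ 0 := by
  filter_upwards [eventually_codiscrete_sin_const_mul_ne_zero (mul_ne_zero two_ne_zero hx),
    eventually_codiscrete_sin_const_mul_ne_zero (mul_ne_zero two_ne_zero hy),
    eventually_codiscrete_sin_const_mul_ne_zero (mul_ne_zero two_ne_zero hz)] with t htx hty htz
  exact (det_Amat_pos htx hty htz s).ne'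

theorem det_Amat_ne_zero_ae_general {cx cy cz : ℝ} (hx : cx ≠ 0) (hy : cy ≠ 0) (hz : cz ≠ 0)
    (s : Fin 3 → ℝ) :
    (∀ K : Set ℝ, IsCompact K → {t | t ∈ K ∧ (Amat cx cy cz t s).det = 0}.Finite) ∧
      ∀ᵐ t, (Amat cx cy cz t s).det ≠ 0 := by
  have hdet := eventually_codiscrete_det_Amat_ne_zero hx hy hz s
  constructor
  · intro K hK
    have hfin := hK.finite_sdiff_of_mem_codiscreteWithin
      (codiscreteWithin_mono (Set.subset_univ K) hdet)
    refine hfin.subset ?_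
    rintro t ⟨htK, ht⟩
    exact ⟨htK, not_not_intro ht⟩
  · rw [← Measure.restrict_univ (μ := volume)]
    exact ae_restrict_le_codiscreteWithin .univ hdet

/-- if `cₓ, c_y, c_z` are all nonzero and `‖s₀‖ ≤ 1` then the zero set
of `t ↦ det A(t,s₀)` is finite in every compact interval `[0,T]`; in particular
`det A(t,s₀) ≠ 0` for almost every `t ≥ 0`. -/
theorem det_Amat_ne_zero_ae (cx cy cz : ℝ) (hx : cx ≠ 0) (hy : cy ≠ 0) (hz : cz ≠ 0)
    (s₀ : EuclideanSpace ℝ (Fin 3)) (hs : ‖s₀‖ ≤ 1) :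
    (∀ T > (0:ℝ), {t : ℝ | t ∈ Set.Icc 0 T ∧ (Amat cx cy cz t s₀).det = 0}.Finite) ∧
    (∀ᵐ t ∂(volume.restrict (Set.Ici (0:ℝ))), (Amat cx cy cz t s₀).det ≠ 0) := by
  obtain ⟨hfin, hae⟩ := det_Amat_ne_zero_ae_general hx hy hz s₀
  exact ⟨fun _ _ ↦ hfin _ isCompact_Icc, ae_restrict_of_ae hae⟩
end
end

section
/- Suppose the odd-ratio condition holds, i.e. c_x, c_y, c_z are all nonzero and there exist integers k₁, k₂, k₃ with c_x·(2k₂+1) = c_y·(2k₁+1) and c_x·(2k₃+1) = c_z·(2k₁+1). Then the system is controllable using only pure probe states: for all s₀, s' ∈ ℝ³ with ‖s₀‖ ≤ 1 and ‖s'‖ ≤ 1, there exist t ≥ 0 and p ∈ ℝ³ with ‖p‖ = 1 such that A(t,s₀)·p + a(t,s₀) = s'. -/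
open Matrix Real

noncomputable section

/-- The odd-ratio condition on the interaction constants. -/
def OddRatio (cx cy cz : ℝ) : Prop :=
  cx ≠ 0 ∧ cy ≠ 0 ∧ cz ≠ 0 ∧
    ∃ k₁ k₂ k₃ : ℤ, cx * (2 * (k₂ : ℝ) + 1) = cy * (2 * (k₁ : ℝ) + 1) ∧
      cx * (2 * (k₃ : ℝ) + 1) = cz * (2 * (k₁ : ℝ) + 1)

/-!
Suppose no pure probe ever reaches the target. Then the set of times at which some probe in the
closed unit ball reaches it is clopen: closed because the ball is compact, and open because at such
a time the probe lies strictly inside the ball and `A` is invertible (otherwise one could move along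
the kernel to the sphere), so solving for the probe keeps it inside the ball at nearby times. Since
`[0, ∞)` is connected and `A(0, s₀) = 0` is singular, this set is empty.

The odd-ratio condition provides a time at which all three cosines vanish; there `a = 0` and `A` is
diagonal with entries `±1`, so the target is reached by a probe of the same norm: contradiction.
-/

open scoped NNReal Topology

section NormedSpace

variable {E : Type*} [NormedAddCommGroup E] [NormedSpace ℝ E]

lemma exists_norm_add_smul_eq {p v : E} {r : ℝ} (hp : ‖p‖ ≤ r) (hv : v ≠ 0) :
    ∃ l : ℝ, ‖p + l • v‖ = r := by
  have hfar : r ≤ ‖p + ((r + ‖p‖) / ‖v‖) • v‖ := by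
    have hr : 0 ≤ r := (norm_nonneg p).trans hp
    calc
      r = ‖((r + ‖p‖) / ‖v‖) • v‖ - ‖p‖ := by
        rw [norm_smul, Real.norm_of_nonneg (by positivity),
          div_mul_cancel₀ _ (norm_ne_zero_iff.mpr hv), add_sub_cancel_right]
      _ ≤ ‖((r + ‖p‖) / ‖v‖) • v + p‖ := norm_sub_le_norm_add _ _
      _ = ‖p + ((r + ‖p‖) / ‖v‖) • v‖ := by rw [add_comm]
  exact mem_range_of_exists_le_of_exists_ge (f := fun l : ℝ => ‖p + l • v‖) (by fun_prop)
    ⟨0, by simpa using hp⟩ ⟨_, hfar⟩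

lemma exists_norm_eq_apply_eq_of_not_injective {F : Type*} [AddCommGroup F] [Module ℝ F]
    {L : E →ₗ[ℝ] F} (hL : ¬ Function.Injective L) {p : E} {r : ℝ} (hp : ‖p‖ ≤ r) :
    ∃ q : E, ‖q‖ = r ∧ L q = L p := by
  obtain ⟨v, hLv, hv⟩ : ∃ v, L v = 0 ∧ v ≠ 0 := by
    simpa [injective_iff_map_eq_zero] using hL
  obtain ⟨l, hl⟩ := exists_norm_add_smul_eq hp hv
  exact ⟨p + l • v, hl, by simp [hLv]⟩

variable {X : Type*} [TopologicalSpace X]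

lemma isClosed_setOf_exists_norm_le_apply_eq [ProperSpace E] {F : Type*} [NormedAddCommGroup F]
    [NormedSpace ℝ F] {A : X → E →L[ℝ] F} {b : X → F} (hA : Continuous A)
    (hb : Continuous b) (r : ℝ) : IsClosed {x | ∃ p : E, ‖p‖ ≤ r ∧ A x p = b x} := by
  have hgraph : IsClosed {y : X × Metric.closedBall (0 : E) r | A y.1 y.2 = b y.1} :=
    isClosed_eq (by fun_prop) (by fun_prop)
  convert isClosedMap_fst_of_compactSpace _ hgraph using 1
  ext x
  simp

lemma eventually_exists_norm_lt_apply_eq [CompleteSpace E] {A : X → E →L[ℝ] E} {b : X → E}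
    {x : X} (hA : ContinuousAt A x) (hb : ContinuousAt b x) (hunit : IsUnit (A x))
    {p : E} {r : ℝ} (hp : ‖p‖ < r) (hpx : A x p = b x) :
    ∀ᶠ y in 𝓝 x, ∃ q : E, ‖q‖ < r ∧ A y q = b y := by
  have hinv : ContinuousAt (fun y => Ring.inverse (A y) (b y)) x := by
    obtain ⟨u, hu⟩ := hunit
    exact ((hu ▸ NormedRing.inverse_continuousAt u).comp hA).clm_apply hb
  have hinvx : Ring.inverse (A x) (b x) = p := by
    rw [← hpx, ← mul_apply_eq_comp, Ring.inverse_mul_cancel _ hunit, one_apply_eq_self]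
  have hlt : ∀ᶠ y in 𝓝 x, ‖Ring.inverse (A y) (b y)‖ < r :=
    hinv.norm.eventually_lt continuousAt_const (by rwa [hinvx])
  filter_upwards [hlt, hA (Units.isOpen.mem_nhds hunit)] with y hy hunit_y
  refine ⟨_, hy, ?_⟩
  rw [← mul_apply_eq_comp, Ring.mul_inverse_cancel _ hunit_y, one_apply_eq_self]

theorem exists_norm_eq_apply_eq_of_norm_le [FiniteDimensional ℝ E] [PreconnectedSpace X]
    {A : X → E →L[ℝ] E} {b : X → E} (hA : Continuous A) (hb : Continuous b)
    {x₀ : X} (hx₀ : ¬ Function.Injective (A x₀))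
    {x₁ : X} {q : E} {r : ℝ} (hq : ‖q‖ ≤ r) (hqx₁ : A x₁ q = b x₁) :
    ∃ (x : X) (p : E), ‖p‖ = r ∧ A x p = b x := by
  have := FiniteDimensional.proper_real E
  have := FiniteDimensional.complete ℝ E
  by_contra! hsphere
  have hinj {x : X} {p : E} (hp : ‖p‖ ≤ r) (hpx : A x p = b x) : Function.Injective (A x) := by
    by_contra hnot
    obtain ⟨p', hp', hp'x⟩ :=
      exists_norm_eq_apply_eq_of_not_injective (L := (A x).toLinearMap) hnot hp
    exact hsphere x p' hp' (hp'x.trans hpx)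
  have hclopen : IsClopen {x | ∃ p : E, ‖p‖ ≤ r ∧ A x p = b x} := by
    refine ⟨isClosed_setOf_exists_norm_le_apply_eq hA hb r, isOpen_iff_mem_nhds.mpr ?_⟩
    rintro x ⟨p, hp, hpx⟩
    have hunit : IsUnit (A x) := ContinuousLinearMap.isUnit_iff_bijective.mpr
      ⟨hinj hp hpx, LinearMap.surjective_of_injective (f := (A x : E →ₗ[ℝ] E)) (hinj hp hpx)⟩
    have hlt : ‖p‖ < r := hp.lt_of_ne fun h => hsphere x p h hpx
    filter_upwards [eventually_exists_norm_lt_apply_eq hA.continuousAt hb.continuousAt hunit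
      hlt hpx] with y ⟨p', hp', hp'y⟩ using ⟨p', hp'.le, hp'y⟩
  obtain ⟨p, hp, hpx₀⟩ : x₀ ∈ {x | ∃ p : E, ‖p‖ ≤ r ∧ A x p = b x} :=
    hclopen.eq_univ ⟨x₁, q, hq, hqx₁⟩ ▸ Set.mem_univ x₀
  exact hx₀ (hinj hp hpx₀)

end NormedSpace

theorem exists_norm_eq_mulVec_add_eq_of_norm_le {X n : Type*} [TopologicalSpace X]
    [PreconnectedSpace X] [Fintype n] [DecidableEq n] {M : X → Matrix n n ℝ} {a : X → n → ℝ}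
    (hM : Continuous M) (ha : Continuous a) {x₀ : X} (hx₀ : (M x₀).det = 0)
    {s : EuclideanSpace ℝ n} {x₁ : X} {q : EuclideanSpace ℝ n} {r : ℝ} (hq : ‖q‖ ≤ r)
    (hqx₁ : M x₁ *ᵥ q + a x₁ = s) :
    ∃ (x : X) (p : EuclideanSpace ℝ n), ‖p‖ = r ∧ M x *ᵥ p + a x = s := by
  let A (x : X) := toEuclideanCLM (𝕜 := ℝ) (M x)
  let b (x : X) := s - WithLp.toLp 2 (a x)
  have hA : Continuous A :=
    (LinearMap.continuous_of_finiteDimensional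
      (toEuclideanCLM (n := n) (𝕜 := ℝ)).toAlgEquiv.toLinearMap).comp hM
  have hb : Continuous b := continuous_const.sub ((PiLp.continuous_toLp 2 _).comp ha)
  have hA₀ : ¬ Function.Injective (A x₀) := by
    obtain ⟨v, hv, hMv⟩ := exists_mulVec_eq_zero_iff.mpr hx₀
    exact fun hinj => hv (by
      simpa using @hinj (WithLp.toLp 2 v) 0 (by simp [A, toEuclideanCLM_toLp, hMv]))
  have apply_eq_iff (x : X) (p : EuclideanSpace ℝ n) : A x p = b x ↔ M x *ᵥ p + a x = s := by
    rw [eq_sub_iff_add_eq, ← (WithLp.ofLp_injective 2).eq_iff]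
    simp [A]
  simp only [← apply_eq_iff] at hqx₁ ⊢
  exact exists_norm_eq_apply_eq_of_norm_le hA hb hA₀ hq hqx₁

lemma exists_norm_eq_diagonal_mulVec_eq {𝕜 n : Type*} [RCLike 𝕜] [Fintype n] [DecidableEq n]
    {d : n → 𝕜} (hd : ∀ i, ‖d i‖ = 1) (s : EuclideanSpace 𝕜 n) :
    ∃ q : EuclideanSpace 𝕜 n, ‖q‖ = ‖s‖ ∧ diagonal d *ᵥ q = s := by
  refine ⟨WithLp.toLp 2 fun i => (d i)⁻¹ * s i, by simp [EuclideanSpace.norm_eq, hd], ?_⟩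
  ext i
  rw [mulVec_diagonal, mul_inv_cancel_left₀ (norm_ne_zero_iff.mp (by simp [hd i]))]

lemma cos_mul_abs (c t : ℝ) : cos (c * |t|) = cos (c * t) := by
  rw [← cos_abs, abs_mul, abs_abs, ← abs_mul, cos_abs]

lemma abs_sin_eq_one_of_cos_eq_zero {x : ℝ} (hx : cos x = 0) : |sin x| = 1 := by
  simp [abs_sin_eq_sqrt_one_sub_cos_sq, hx]

lemma OddRatio.exists_cos_eq_zero {cx cy cz : ℝ} (h : OddRatio cx cy cz) :
    ∃ t : ℝ≥0, cos (2 * cx * t) = 0 ∧ cos (2 * cy * t) = 0 ∧ cos (2 * cz * t) = 0 := by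
  obtain ⟨hcx, -, -, k₁, k₂, k₃, hxy, hxz⟩ := h
  refine ⟨Real.nnabs ((2 * k₁ + 1) * π / 2 / (2 * cx)), ?_⟩
  simp only [Real.coe_nnabs, cos_mul_abs, cos_eq_zero_iff]
  refine ⟨⟨k₁, ?_⟩, ⟨k₂, ?_⟩, ⟨k₃, ?_⟩⟩ <;> field_simp
  · linear_combination -hxy
  · linear_combination -hxz

section Bloch

variable (cx cy cz : ℝ) (s : Fin 3 → ℝ)

lemma continuous_Amat : Continuous fun t => Amat cx cy cz t s := by
  unfold Amat
  fun_prop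

lemma continuous_avec : Continuous fun t => avec cx cy cz t s := by
  unfold avec
  fun_prop

lemma Amat_zero : Amat cx cy cz 0 s = 0 := by
  ext i j
  fin_cases i <;> fin_cases j <;> simp [Amat]

variable {cx cy cz} {t : ℝ}

lemma Amat_eq_diagonal_of_cos_eq_zero (hx : cos (2 * cx * t) = 0) (hy : cos (2 * cy * t) = 0)
    (hz : cos (2 * cz * t) = 0) :
    Amat cx cy cz t s = diagonal ![sin (2 * cy * t) * sin (2 * cz * t),
      sin (2 * cx * t) * sin (2 * cz * t), sin (2 * cx * t) * sin (2 * cy * t)] := by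
  ext i j
  fin_cases i <;> fin_cases j <;> simp [Amat, hx, hy, hz]

lemma avec_eq_zero_of_cos_eq_zero (hx : cos (2 * cx * t) = 0) (hy : cos (2 * cy * t) = 0) :
    avec cx cy cz t s = 0 := by
  ext i
  fin_cases i <;> simp [avec, hx, hy]

lemma exists_probe_of_cos_eq_zero (hx : cos (2 * cx * t) = 0) (hy : cos (2 * cy * t) = 0)
    (hz : cos (2 * cz * t) = 0) (s' : EuclideanSpace ℝ (Fin 3)) :
    ∃ q : EuclideanSpace ℝ (Fin 3), ‖q‖ = ‖s'‖ ∧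
      Amat cx cy cz t s *ᵥ q + avec cx cy cz t s = s' := by
  rw [Amat_eq_diagonal_of_cos_eq_zero s hx hy hz, avec_eq_zero_of_cos_eq_zero s hx hy]
  simp only [add_zero]
  refine exists_norm_eq_diagonal_mulVec_eq (fun i => ?_) s'
  fin_cases i <;> simp [abs_sin_eq_one_of_cos_eq_zero, hx, hy, hz]

end Bloch

theorem oddRatio_imp_controllable_pure_probe_general {cx cy cz : ℝ} (h : OddRatio cx cy cz)
    (s₀ : Fin 3 → ℝ) {s' : EuclideanSpace ℝ (Fin 3)} (hs' : ‖s'‖ ≤ 1) :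
    ∃ t ≥ (0 : ℝ), ∃ p : EuclideanSpace ℝ (Fin 3), ‖p‖ = 1 ∧
      Amat cx cy cz t s₀ *ᵥ p + avec cx cy cz t s₀ = s' := by
  obtain ⟨T, hx, hy, hz⟩ := h.exists_cos_eq_zero
  obtain ⟨q, hq, hqT⟩ := exists_probe_of_cos_eq_zero s₀ hx hy hz s'
  have hM : Continuous fun t : ℝ≥0 => Amat cx cy cz t s₀ :=
    (continuous_Amat cx cy cz s₀).comp NNReal.continuous_coe
  have ha : Continuous fun t : ℝ≥0 => avec cx cy cz t s₀ :=
    (continuous_avec cx cy cz s₀).comp NNReal.continuous_coe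
  have hdet : (Amat cx cy cz (0 : ℝ≥0) s₀).det = 0 := by
    rw [NNReal.coe_zero, Amat_zero, det_zero]
  obtain ⟨t, p, hp, hpt⟩ :=
    exists_norm_eq_mulVec_add_eq_of_norm_le hM ha hdet (hq.trans_le hs') hqT
  exact ⟨t, t.2, p, hp, hpt⟩

/-- Remark 1: under the odd-ratio condition, the system is
controllable using only pure probe states (`‖p‖ = 1`). -/
theorem oddRatio_imp_controllable_pure_probe (cx cy cz : ℝ)
    (h : OddRatio cx cy cz) :
    ∀ s₀ s' : EuclideanSpace ℝ (Fin 3), ‖s₀‖ ≤ 1 → ‖s'‖ ≤ 1 →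
      ∃ t ≥ (0:ℝ), ∃ p : EuclideanSpace ℝ (Fin 3), ‖p‖ = 1 ∧
        (Amat cx cy cz t s₀).mulVec p + avec cx cy cz t s₀ = s' :=
  fun s₀ _ _ hs' => oddRatio_imp_controllable_pure_probe_general h s₀ hs'
end
end
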